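/- Let [m,p] be the smallest set of operations on {0,1,2} that contains m, p, and all projections, and is closed under composition. Then every binary operation in [m,p] is a projection, and every ternary operation f in [m,p] maps {0,1}^3 into {0,1} and its restriction to {0,1} is either a projection or the ternary majority operation on {0,1}. -/

import Mathlib

/-- The three-element domain `{0,1,2}`. -/
abbrev D3 : Type := Fin 3

/-- `n`-ary operations on `{0,1,2}`. -/
abbrev Op (n : ℕ) : Type := (Fin n → D3) → D3

/-- The operation `∨₃` (paper–scissor–stone), given by its table. -/
def or3 (a b : D3) : D3 := ![![0,1,0], ![1,1,2], ![0,2,2]] a b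

/-- The operation `∧₃`, given by its table. -/
def and3 (a b : D3) : D3 := ![![0,0,2], ![0,1,1], ![2,1,2]] a b

/-- The operation `m`. -/
def mOp (x y z : D3) : D3 :=
  if x = y ∨ y = z ∨ x = z then or3 (or3 (and3 x y) (and3 x z)) (and3 y z) else x

/-- The operation `p`. -/
def pOp (x y z : D3) : D3 :=
  if x = y ∨ y = z ∨ x = z then x else x + 1

/-- The clone `[m,p]`: the smallest set of operations on `{0,1,2}` containing `m`, `p`
and all projections, and closed under composition. -/
inductive Gen : ∀ n : ℕ, Op n → Prop
  | proj (n : ℕ) (i : Fin n) : Gen n fun x => x i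
  | m_mem : Gen 3 fun v => mOp (v 0) (v 1) (v 2)
  | p_mem : Gen 3 fun v => pOp (v 0) (v 1) (v 2)
  | comp (n m : ℕ) (f : Op n) (g : Fin n → Op m) :
      Gen n f → (∀ i, Gen m (g i)) → Gen m fun x => f fun i => g i x

/-!
On a two-element subset of `{0,1,2}` the operation `m` is the majority operation and `p` is the
first projection, whichever subset it is. So each `f ∈ [m,p]` acts on all two-element subsets as one
and the same Boolean function `h`, for every identification of the subset with `Bool`. Exchanging
the two elements shows that `h` is self-dual, and `h` is monotone because majority and the
projections are.

A monotone self-dual `h` taking the value `true` at the indicator of some `i` is the `i`-th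
projection. If there is no such `i`, then `h v = b` as soon as all coordinates of `v` but one are
equal to `b`, which is impossible in arity two and forces the majority operation in arity three.
-/

section BooleanFunctions

variable {ι : Type*} {h : (ι → Bool) → Bool} {v : ι → Bool} {i : ι} {b : Bool}

/-- Self-duality of a Boolean function: negating all arguments negates the value. -/
def IsSelfDual (h : (ι → Bool) → Bool) : Prop :=
  ∀ v, h vᶜ = (h v)ᶜ

/-- The ternary majority operation on `Bool`, as the median of the lattice `Bool`. -/
def majority (v : Fin 3 → Bool) : Bool :=
  v 0 ⊓ v 1 ⊔ v 0 ⊓ v 2 ⊔ v 1 ⊓ v 2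

theorem monotone_majority : Monotone majority := by
  intro v w hvw
  unfold majority
  gcongr <;> exact hvw _

theorem exists_forall_ne_eq_majority (v : Fin 3 → Bool) : ∃ i, ∀ j ≠ i, v j = majority v := by
  decide +revert

theorem IsSelfDual.eq_eval_of_apply_update_eq_true [DecidableEq ι] (hd : IsSelfDual h)
    (hm : Monotone h) (hi : h (Function.update ⊥ i true) = true) : h = Function.eval i := by
  have eq_true {w : ι → Bool} (hw : w i = true) : h w = true :=
    top_le_iff.mp <| hi.ge.trans <| hm <| update_le_iff.mpr ⟨hw.ge, fun _ _ ↦ bot_le⟩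
  funext v
  cases hv : v i with
  | true => simpa only [Function.eval, hv] using eq_true hv
  | false =>
    have hc : h vᶜ = true := eq_true (by simp [hv])
    simpa [hd v, hv] using hc

theorem IsSelfDual.apply_eq_of_forall_ne [DecidableEq ι] (hd : IsSelfDual h) (hm : Monotone h)
    (hi : h (Function.update ⊥ i true) = false) (hv : ∀ j ≠ i, v j = b) : h v = b := by
  have eq_false {w : ι → Bool} (hw : ∀ j ≠ i, w j = false) : h w = false :=
    le_bot_iff.mp <| (hm <| le_update_iff.mpr ⟨le_top, fun j hj ↦ (hw j hj).le⟩).trans hi.le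
  cases b with
  | false => exact eq_false hv
  | true =>
    have hc : h vᶜ = false := eq_false fun j hj ↦ by simp [hv j hj]
    simpa [hd v] using hc

theorem IsSelfDual.exists_eq_eval_or_forall_apply_eq (hd : IsSelfDual h) (hm : Monotone h) :
    (∃ i, h = Function.eval i) ∨ ∀ i v b, (∀ j ≠ i, v j = b) → h v = b := by
  classical
  by_cases hi : ∃ i, h (Function.update ⊥ i true) = true
  · exact .inl <| hi.imp fun _ ↦ hd.eq_eval_of_apply_update_eq_true hm
  · simp only [not_exists, Bool.not_eq_true] at hi
    exact .inr fun i _ _ ↦ hd.apply_eq_of_forall_ne hm (hi i)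

theorem IsSelfDual.exists_eq_eval_of_fin_two {h : (Fin 2 → Bool) → Bool} (hd : IsSelfDual h)
    (hm : Monotone h) : ∃ i, h = Function.eval i := by
  refine (hd.exists_eq_eval_or_forall_apply_eq hm).resolve_right fun h_eq ↦ ?_
  have h_false : h ![false, true] = false := h_eq 1 _ _ (by decide)
  have h_true : h ![false, true] = true := h_eq 0 _ _ (by decide)
  exact Bool.false_ne_true (h_false.symm.trans h_true)

theorem IsSelfDual.exists_eq_eval_or_eq_majority {h : (Fin 3 → Bool) → Bool} (hd : IsSelfDual h)
    (hm : Monotone h) : (∃ i, h = Function.eval i) ∨ h = majority :=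
  (hd.exists_eq_eval_or_forall_apply_eq hm).imp_right fun h_eq ↦ funext fun v ↦
    let ⟨i, hv⟩ := exists_forall_ne_eq_majority v
    h_eq i v _ hv

end BooleanFunctions

section BooleanTrace

variable {ι κ α : Type*} {f : (ι → α) → α} {h : (ι → Bool) → Bool} {x : ι → α} {a b : α}

theorem exists_eq_cond_comp (hx : ∀ j, x j = a ∨ x j = b) :
    ∃ v : ι → Bool, x = (fun t ↦ cond t b a) ∘ v := by
  refine Set.range_subset_range_iff_exists_comp.mp ?_
  rintro _ ⟨j, rfl⟩
  simpa [eq_comm] using hx j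

/-- `h` is the Boolean trace of `f`: on every subset of `α` with at most two elements, enumerated in
any way by a map `g : Bool → α`, the operation `f` acts as `h`. -/
def IsBooleanTrace (f : (ι → α) → α) (h : (ι → Bool) → Bool) : Prop :=
  ∀ (g : Bool → α) (v : ι → Bool), f (g ∘ v) = g (h v)

theorem isBooleanTrace_eval (i : ι) :
    IsBooleanTrace (Function.eval i : (ι → α) → α) (Function.eval i) :=
  fun _ _ ↦ rfl

theorem IsBooleanTrace.comp (hf : IsBooleanTrace f h) {g : ι → (κ → α) → α}
    {k : ι → (κ → Bool) → Bool} (hg : ∀ i, IsBooleanTrace (g i) (k i)) :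
    IsBooleanTrace (fun x ↦ f fun i ↦ g i x) (fun v ↦ h fun i ↦ k i v) := fun e v ↦
  calc f (fun i ↦ g i (e ∘ v))
    _ = f (e ∘ fun i ↦ k i v) := congrArg f <| funext fun i ↦ hg i e v
    _ = e (h fun i ↦ k i v) := hf e _

theorem IsBooleanTrace.isSelfDual [Nontrivial α] (hf : IsBooleanTrace f h) : IsSelfDual h := by
  intro v
  obtain ⟨a, b, hab⟩ := exists_pair_ne α
  have cond_injective : Function.Injective fun t ↦ cond t a b :=
    Bool.injective_iff.mpr hab.symm
  refine compl_injective <| cond_injective ?_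
  calc cond (h vᶜ)ᶜ a b
    _ = f ((fun t ↦ cond tᶜ a b) ∘ vᶜ) := (hf (fun t ↦ cond tᶜ a b) vᶜ).symm
    _ = f ((fun t ↦ cond t a b) ∘ v) := by simp [Function.comp_def]
    _ = cond (h v)ᶜᶜ a b := by rw [hf, compl_compl]

theorem IsBooleanTrace.apply_eq_or_eq (hf : IsBooleanTrace f h) (hx : ∀ j, x j = a ∨ x j = b) :
    f x = a ∨ f x = b := by
  obtain ⟨v, rfl⟩ := exists_eq_cond_comp hx
  rw [hf]
  cases h v <;> simp

theorem IsBooleanTrace.apply_eq_of_eval {i : ι} (hf : IsBooleanTrace f (Function.eval i))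
    (hx : ∀ j, x j = a ∨ x j = b) : f x = x i := by
  obtain ⟨v, rfl⟩ := exists_eq_cond_comp hx
  exact hf _ v

theorem IsBooleanTrace.eq_eval_of_fin_two {f : (Fin 2 → α) → α} {i : Fin 2}
    (hf : IsBooleanTrace f (Function.eval i)) : f = Function.eval i :=
  funext fun x ↦ hf.apply_eq_of_eval (a := x 0) (b := x 1) <| by
    simp [Fin.forall_fin_two]

theorem IsBooleanTrace.apply_eq_of_majority [DecidableEq α] {f : (Fin 3 → α) → α}
    (hf : IsBooleanTrace f majority) {x : Fin 3 → α} (hx : ∀ j, x j = a ∨ x j = b) :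
    f x = if x 0 = x 1 then x 0 else x 2 := by
  obtain ⟨v, rfl⟩ := exists_eq_cond_comp hx
  rw [hf]
  simp only [Function.comp_apply, majority]
  cases v 0 <;> cases v 1 <;> cases v 2 <;> simp +contextual [eq_comm]

end BooleanTrace

theorem mOp_self_left (a b : D3) : mOp a a b = a := by
  decide +revert

theorem mOp_self_right (a b : D3) : mOp a b b = b := by
  decide +revert

theorem mOp_self_outer (a b : D3) : mOp a b a = a := by
  decide +revert

theorem isBooleanTrace_mOp :
    IsBooleanTrace (fun x : Fin 3 → D3 ↦ mOp (x 0) (x 1) (x 2)) majority := by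
  intro g v
  simp only [Function.comp_apply, majority]
  cases v 0 <;> cases v 1 <;> cases v 2 <;>
    simp [mOp_self_left, mOp_self_right, mOp_self_outer]

theorem isBooleanTrace_pOp :
    IsBooleanTrace (fun x : Fin 3 → D3 ↦ pOp (x 0) (x 1) (x 2)) (Function.eval 0) := by
  intro g v
  have two_agree : v 0 = v 1 ∨ v 1 = v 2 ∨ v 0 = v 2 := by
    decide +revert
  exact if_pos <| two_agree.imp (congrArg g) <| Or.imp (congrArg g) (congrArg g)

theorem Gen.exists_monotone_isBooleanTrace {n : ℕ} {f : Op n} (hf : Gen n f) :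
    ∃ h, Monotone h ∧ IsBooleanTrace f h := by
  induction hf with
  | proj n i => exact ⟨Function.eval i, Function.monotone_eval i, isBooleanTrace_eval i⟩
  | m_mem => exact ⟨majority, monotone_majority, isBooleanTrace_mOp⟩
  | p_mem => exact ⟨Function.eval 0, Function.monotone_eval 0, isBooleanTrace_pOp⟩
  | comp n m f g _ _ ihf ihg =>
    obtain ⟨h, h_mono, h_trace⟩ := ihf
    choose k k_mono k_trace using ihg
    exact ⟨fun v ↦ h fun i ↦ k i v, fun _ _ hvw ↦ h_mono fun i ↦ k_mono i hvw,
      h_trace.comp k_trace⟩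

theorem Gen.exists_isBooleanTrace {n : ℕ} {f : Op n} (hf : Gen n f) :
    ∃ h, IsSelfDual h ∧ Monotone h ∧ IsBooleanTrace f h :=
  let ⟨h, h_mono, h_trace⟩ := hf.exists_monotone_isBooleanTrace
  ⟨h, h_trace.isSelfDual, h_mono, h_trace⟩

/-- Every binary operation in `[m,p]` is a projection, and every ternary operation in `[m,p]`
maps `{0,1}³` into `{0,1}` and its restriction to `{0,1}` is a projection or the
ternary majority operation. -/
theorem stmt10 :
    (∀ f : Op 2, Gen 2 f → ∃ i : Fin 2, f = fun x => x i) ∧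
    (∀ f : Op 3, Gen 3 f →
      (∀ x : Fin 3 → D3, (∀ j, x j = 0 ∨ x j = 1) → (f x = 0 ∨ f x = 1)) ∧
      ((∃ i : Fin 3, ∀ x : Fin 3 → D3, (∀ j, x j = 0 ∨ x j = 1) → f x = x i) ∨
       (∀ x : Fin 3 → D3, (∀ j, x j = 0 ∨ x j = 1) →
          f x = if x 0 = x 1 then x 0 else x 2))) := by
  refine ⟨fun f hf ↦ ?_, fun f hf ↦ ?_⟩ <;>
    obtain ⟨h, h_dual, h_mono, h_trace⟩ := hf.exists_isBooleanTrace
  · obtain ⟨i, rfl⟩ := h_dual.exists_eq_eval_of_fin_two h_mono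
    exact ⟨i, h_trace.eq_eval_of_fin_two⟩
  · refine ⟨fun x hx ↦ h_trace.apply_eq_or_eq hx, ?_⟩
    rcases h_dual.exists_eq_eval_or_eq_majority h_mono with ⟨i, rfl⟩ | rfl
    · exact .inl ⟨i, fun x hx ↦ h_trace.apply_eq_of_eval hx⟩
    · exact .inr fun x hx ↦ h_trace.apply_eq_of_majority hx
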